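/- arXiv:1606.07915 — 2 statements merged into one kernel-verified Lean document; each statement's English description precedes it below -/
import Mathlib

section
/- Let a_1 < a_2 < a_3 be positive integers, let k_1, k_2, k_3 ∈ ℝ, and let f : ℕ → ℝ satisfy the three-term recurrence f(n) = k_1 f(n−a_1) + k_2 f(n−a_2) + k_3 f(n−a_3) for all n ≥ a_3. Define g : ℤ → ℝ by g(q) = Σ_{(x_1,x_2,x_3) ∈ ℕ³, a_1 x_1 + a_2 x_2 + a_3 x_3 = q} k_1^{x_1} k_2^{x_2} k_3^{x_3} · (x_1+x_2+x_3)!/(x_1! x_2! x_3!), with g(q) = 0 for q < 0. Then for every n ≥ a_3, f(n) = k_2 Σ_{i = a_3 − a_2}^{a_3 − a_1 − 1} g(n − i − a_2) f(i) + k_3 Σ_{i = 0}^{a_3 − a_1 − 1} g(n − i − a_3) f(i) + Σ_{i = a_3 − a_1}^{a_3 − 1} g(n − i) f(i). -/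
/-!
Extend `f` by zero to the function `F` on `ℤ`, and let `D = F - k₁ F(· - a₁) - k₂ F(· - a₂) - k₃ F(· - a₃)`
be the defect of the recurrence; it is supported in `[0, a₃)`. The function `g` is the fundamental
solution: `g q = [q = 0] + k₁ g(q - a₁) + k₂ g(q - a₂) + k₃ g(q - a₃)` (`fundamental_rec`), which is
the Pascal-type recurrence for multinomial coefficients (`weight_rec`) summed over the solutions of
`a₁ x₁ + a₂ x₂ + a₃ x₃ = q`. Hence the convolution `g * D` satisfies the same inhomogeneous recurrence
as `F`; both vanish on negative integers, so they agree (`eq_of_rec`). Expanding `D` and shifting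
indices (`sum_shift`) gives, for `n ≥ a₃`,
`f n = ∑_{i < a₃} g(n - i) f i - k₁ ∑_{i < a₃ - a₁} g(n - i - a₁) f i - k₂ ∑_{i < a₃ - a₂} g(n - i - a₂) f i`.
For `i < a₃ - a₁` the recurrence of `g` at `n - i > 0` rewrites `g(n - i) - k₁ g(n - i - a₁)` as
`k₂ g(n - i - a₂) + k₃ g(n - i - a₃)`, and the `k₂`-terms with `i < a₃ - a₂` cancel.
-/

/-- The contribution of `x` to the sum defining `g`: a monomial times a multinomial coefficient. -/
noncomputable def weight (k₁ k₂ k₃ : ℝ) (x : ℕ × ℕ × ℕ) : ℝ :=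
  k₁ ^ x.1 * k₂ ^ x.2.1 * k₃ ^ x.2.2 * (Nat.multinomial Finset.univ ![x.1, x.2.1, x.2.2] : ℝ)

/-- The natural solutions of `a₁ x₁ + a₂ x₂ + a₃ x₃ = q`. -/
def sols (a₁ a₂ a₃ : ℕ) (q : ℤ) : Set (ℕ × ℕ × ℕ) :=
  {x | (a₁ : ℤ) * x.1 + (a₂ : ℤ) * x.2.1 + (a₃ : ℤ) * x.2.2 = q}

lemma multinomial_three (a b c : ℕ) :
    (Nat.multinomial Finset.univ ![a, b, c] : ℝ) =
      ((a + b + c).factorial : ℝ) / (a.factorial * b.factorial * c.factorial) := by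
  have h := Nat.multinomial_spec Finset.univ ![a, b, c]
  simp only [Fin.prod_univ_three, Fin.sum_univ_three, Matrix.cons_val] at h
  rw [eq_div_iff (by positivity), ← h]
  push_cast
  ring

/-- Pascal's recurrence: a nonempty word in three letters is sorted by its last letter, and the
empty word accounts for the extra `1` at the origin. -/
lemma weight_rec (k₁ k₂ k₃ : ℝ) (x : ℕ × ℕ × ℕ) :
    weight k₁ k₂ k₃ x = (if x = 0 then 1 else 0)
      + (if x.1 = 0 then 0 else k₁ * weight k₁ k₂ k₃ (x.1 - 1, x.2.1, x.2.2))
      + (if x.2.1 = 0 then 0 else k₂ * weight k₁ k₂ k₃ (x.1, x.2.1 - 1, x.2.2))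
      + (if x.2.2 = 0 then 0 else k₃ * weight k₁ k₂ k₃ (x.1, x.2.1, x.2.2 - 1)) := by
  obtain ⟨a, b, c⟩ := x
  by_cases h0 : a + b + c = 0
  · obtain ⟨rfl, rfl, rfl⟩ : a = 0 ∧ b = 0 ∧ c = 0 := by omega
    simp [weight, multinomial_three]
  obtain ⟨s, hs⟩ : ∃ s, a + b + c = s + 1 := ⟨a + b + c - 1, by omega⟩
  set Q : ℝ := k₁ ^ a * k₂ ^ b * k₃ ^ c *
    (s.factorial / (a.factorial * b.factorial * c.factorial)) with hQ
  -- Each of the three terms is the corresponding exponent times the common factor `Q`.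
  have h1 : (if a = 0 then 0 else k₁ * weight k₁ k₂ k₃ (a - 1, b, c)) = a * Q := by
    rcases a with _ | a
    · simp
    · have : a + b + c = s := by omega
      simp only [weight, multinomial_three, hQ, Nat.factorial_succ, Nat.add_sub_cancel, this,
        if_neg (Nat.succ_ne_zero a)]
      push_cast
      field_simp
      ring
  have h2 : (if b = 0 then 0 else k₂ * weight k₁ k₂ k₃ (a, b - 1, c)) = b * Q := by
    rcases b with _ | b
    · simp
    · have : a + b + c = s := by omega
      simp only [weight, multinomial_three, hQ, Nat.factorial_succ, Nat.add_sub_cancel, this,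
        if_neg (Nat.succ_ne_zero b)]
      push_cast
      field_simp
      ring
  have h3 : (if c = 0 then 0 else k₃ * weight k₁ k₂ k₃ (a, b, c - 1)) = c * Q := by
    rcases c with _ | c
    · simp
    · have : a + b + c = s := by omega
      simp only [weight, multinomial_three, hQ, Nat.factorial_succ, Nat.add_sub_cancel, this,
        if_neg (Nat.succ_ne_zero c)]
      push_cast
      field_simp
      ring
  have hne : ((a, b, c) : ℕ × ℕ × ℕ) ≠ 0 := by
    intro h
    simp only [Prod.mk_eq_zero] at h
    omega
  have hs' : (a + b + c : ℝ) = s + 1 := by exact_mod_cast hs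
  simp only [h1, h2, h3, if_neg hne]
  have hw : weight k₁ k₂ k₃ (a, b, c) = (s + 1) * Q := by
    simp only [weight, multinomial_three, hQ, hs, Nat.factorial_succ]
    push_cast
    ring
  rw [hw, ← hs']
  ring

lemma sols_finite {a₁ a₂ a₃ : ℕ} (h1 : 0 < a₁) (h2 : 0 < a₂) (h3 : 0 < a₃) (q : ℤ) :
    (sols a₁ a₂ a₃ q).Finite := by
  refine (Set.finite_Iic ((q.toNat, q.toNat, q.toNat) : ℕ × ℕ × ℕ)).subset ?_
  rintro ⟨x, y, z⟩ h
  simp only [sols, Set.mem_ofPred_eq] at h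
  have hx : (x : ℤ) ≤ a₁ * x := le_mul_of_one_le_left (by positivity) (by exact_mod_cast h1)
  have hy : (y : ℤ) ≤ a₂ * y := le_mul_of_one_le_left (by positivity) (by exact_mod_cast h2)
  have hz : (z : ℤ) ≤ a₃ * z := le_mul_of_one_le_left (by positivity) (by exact_mod_cast h3)
  simp only [Set.mem_Iic, Prod.mk_le_mk]
  omega

lemma sols_neg {a₁ a₂ a₃ : ℕ} {q : ℤ} (hq : q < 0) : sols a₁ a₂ a₃ q = ∅ := by
  ext ⟨x, y, z⟩
  simp only [sols, Set.mem_ofPred_eq, Set.mem_empty_iff_false, iff_false]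
  have : (0 : ℤ) ≤ (a₁ : ℤ) * x + (a₂ : ℤ) * y + (a₃ : ℤ) * z := by positivity
  omega

/-- Reindexing along an injective map `e`: only points of `range e` contribute to the sum over `S`.
Below, `e` increments one coordinate, so that it maps `sols a₁ a₂ a₃ (q - aᵢ)` into `sols a₁ a₂ a₃ q`. -/
lemma finsum_shift {α : Type*} {S T : Set α} {e : α → α} (he : e.Injective) {u h : α → ℝ}
    (hST : ∀ x, e x ∈ S ↔ x ∈ T) (hu : ∀ x, u x ≠ 0 → x ∈ Set.range e)
    (huh : ∀ x, u (e x) = h x) :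
    ∑ᶠ x ∈ S, u x = ∑ᶠ x ∈ T, h x := by
  rw [finsum_mem_inter_support_eq' u S (e '' T), finsum_mem_image he.injOn]
  · simp only [huh]
  · intro x hx
    obtain ⟨y, rfl⟩ := hu x hx
    rw [hST, he.mem_set_image]

/-- The sum of the weights over all solutions is the fundamental solution of the recurrence. -/
lemma fundamental_rec {a₁ a₂ a₃ : ℕ} (h1 : 0 < a₁) (h2 : 0 < a₂) (h3 : 0 < a₃)
    (k₁ k₂ k₃ : ℝ) {g : ℤ → ℝ}
    (hg : ∀ q, g q = ∑ᶠ x ∈ sols a₁ a₂ a₃ q, weight k₁ k₂ k₃ x) (q : ℤ) :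
    g q = (if q = 0 then 1 else 0) + k₁ * g (q - a₁) + k₂ * g (q - a₂) + k₃ * g (q - a₃) := by
  have hF := fun r => sols_finite h1 h2 h3 r
  rw [hg q, finsum_mem_congr rfl (fun x _ => weight_rec k₁ k₂ k₃ x),
    finsum_mem_add_distrib (hF q), finsum_mem_add_distrib (hF q), finsum_mem_add_distrib (hF q),
    hg (q - a₁), hg (q - a₂), hg (q - a₃), ← smul_eq_mul k₁, ← smul_eq_mul k₂, ← smul_eq_mul k₃,
    smul_finsum_mem (hF _), smul_finsum_mem (hF _), smul_finsum_mem (hF _)]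
  congr 1
  · congr 1
    · congr 1
      · by_cases hq : q = 0
        · rw [if_pos hq, finsum_mem_inter_support_eq' _ _ {0}, finsum_mem_singleton, if_pos rfl]
          intro x hx
          have hx0 : x = 0 := by by_contra h; simp [h] at hx
          simp [hx0, sols, hq]
        · rw [if_neg hq]
          apply finsum_mem_eq_zero_of_forall_eq_zero
          intro x hx
          rw [if_neg]
          rintro rfl
          simp [sols] at hx
          exact hq hx.symm
      · refine finsum_shift (e := fun x => (x.1 + 1, x.2.1, x.2.2)) ?_ ?_ ?_ ?_
        · rintro ⟨_, _, _⟩ ⟨_, _, _⟩ h; simpa using h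
        · rintro ⟨x, y, z⟩
          simp only [sols, Set.mem_ofPred_eq]
          push_cast
          constructor <;> intro h <;> linarith
        · rintro ⟨x, y, z⟩ h
          rcases x with _ | x
          · simp at h
          · exact ⟨(x, y, z), rfl⟩
        · simp
    · refine finsum_shift (e := fun x => (x.1, x.2.1 + 1, x.2.2)) ?_ ?_ ?_ ?_
      · rintro ⟨_, _, _⟩ ⟨_, _, _⟩ h; simpa using h
      · rintro ⟨x, y, z⟩
        simp only [sols, Set.mem_ofPred_eq]
        push_cast
        constructor <;> intro h <;> linarith
      · rintro ⟨x, y, z⟩ h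
        rcases y with _ | y
        · simp at h
        · exact ⟨(x, y, z), rfl⟩
      · simp
  · refine finsum_shift (e := fun x => (x.1, x.2.1, x.2.2 + 1)) ?_ ?_ ?_ ?_
    · rintro ⟨_, _, _⟩ ⟨_, _, _⟩ h; simpa using h
    · rintro ⟨x, y, z⟩
      simp only [sols, Set.mem_ofPred_eq]
      push_cast
      constructor <;> intro h <;> linarith
    · rintro ⟨x, y, z⟩ h
      rcases z with _ | z
      · simp at h
      · exact ⟨(x, y, z), rfl⟩
    · simp

/-- The inhomogeneous recurrence has only one solution vanishing on the negative integers. -/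
lemma eq_of_rec {a₁ a₂ a₃ : ℕ} (h1 : 0 < a₁) (h2 : 0 < a₂) (h3 : 0 < a₃) {k₁ k₂ k₃ : ℝ}
    {P F D : ℤ → ℝ} (hP0 : ∀ q < 0, P q = 0) (hF0 : ∀ q < 0, F q = 0)
    (hP : ∀ q, 0 ≤ q → P q = D q + k₁ * P (q - a₁) + k₂ * P (q - a₂) + k₃ * P (q - a₃))
    (hF : ∀ q, F q = D q + k₁ * F (q - a₁) + k₂ * F (q - a₂) + k₃ * F (q - a₃)) (q : ℤ) :
    P q = F q := by
  have key : ∀ N : ℕ, ∀ q : ℤ, q < N → P q = F q := by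
    intro N
    induction N with
    | zero => intro q hq; rw [hP0 q (by simpa using hq), hF0 q (by simpa using hq)]
    | succ N ih =>
      intro q hq
      push_cast at hq
      by_cases h : q < 0
      · rw [hP0 q h, hF0 q h]
      · rw [hP q (by omega), hF q, ih _ (by omega), ih _ (by omega), ih _ (by omega)]
  exact key (q.toNat + 1) q (by omega)

/-- The first `a` terms vanish because `F` does on negative integers. -/
lemma sum_shift (g F : ℤ → ℝ) (hF0 : ∀ q < 0, F q = 0) (n : ℤ) {a b : ℕ} (hab : a ≤ b) :
    ∑ m ∈ Finset.range b, g (n - m) * F ((m : ℤ) - a)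
      = ∑ i ∈ Finset.range (b - a), g (n - i - a) * F i := by
  obtain ⟨c, rfl⟩ := Nat.exists_eq_add_of_le hab
  rw [Finset.sum_range_add, Finset.sum_eq_zero, zero_add, Nat.add_sub_cancel_left]
  · refine Finset.sum_congr rfl fun i _ => ?_
    push_cast
    congr 2 <;> ring
  · intro m hm
    rw [hF0 _ (by have := Finset.mem_range.1 hm; omega), mul_zero]


theorem stmt7 (a₁ a₂ a₃ : ℕ) (ha₁ : 0 < a₁) (h12 : a₁ < a₂) (h23 : a₂ < a₃)
    (k₁ k₂ k₃ : ℝ) (f : ℕ → ℝ)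
    (hf : ∀ n, a₃ ≤ n → f n = k₁ * f (n - a₁) + k₂ * f (n - a₂) + k₃ * f (n - a₃))
    (g : ℤ → ℝ)
    (hg : ∀ q : ℤ, g q = ∑ᶠ x ∈ {x : ℕ × ℕ × ℕ |
        (a₁ : ℤ) * x.1 + (a₂ : ℤ) * x.2.1 + (a₃ : ℤ) * x.2.2 = q},
        k₁ ^ x.1 * k₂ ^ x.2.1 * k₃ ^ x.2.2 *
          (Nat.multinomial Finset.univ ![x.1, x.2.1, x.2.2] : ℝ))
    (n : ℕ) (hn : a₃ ≤ n) :
    f n = k₂ * (∑ i ∈ Finset.Icc (a₃ - a₂) (a₃ - a₁ - 1), g ((n : ℤ) - i - a₂) * f i)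
        + k₃ * (∑ i ∈ Finset.range (a₃ - a₁), g ((n : ℤ) - i - a₃) * f i)
        + ∑ i ∈ Finset.Icc (a₃ - a₁) (a₃ - 1), g ((n : ℤ) - i) * f i := by
  have h2 : 0 < a₂ := ha₁.trans h12
  have h3 : 0 < a₃ := h2.trans h23
  have hgw : ∀ q, g q = ∑ᶠ x ∈ sols a₁ a₂ a₃ q, weight k₁ k₂ k₃ x := hg
  have hrec := fundamental_rec ha₁ h2 h3 k₁ k₂ k₃ hgw
  have hg0 : ∀ q < 0, g q = 0 := fun q hq => by
    rw [hgw, sols_neg hq, finsum_mem_empty]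
  obtain ⟨F, hFdef⟩ : ∃ F : ℤ → ℝ, F = fun q => if q < 0 then 0 else f q.toNat := ⟨_, rfl⟩
  have hF0 : ∀ q < 0, F q = 0 := fun q hq => by simp [hFdef, hq]
  have hFf : ∀ i : ℕ, F i = f i := fun i => by simp [hFdef]
  obtain ⟨D, hD⟩ : ∃ D : ℤ → ℝ, D = fun q =>
    F q - k₁ * F (q - a₁) - k₂ * F (q - a₂) - k₃ * F (q - a₃) := ⟨_, rfl⟩
  have hDbig : ∀ m : ℕ, a₃ ≤ m → D m = 0 := fun m hm => by
    rw [hD]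
    simp only
    rw [← Nat.cast_sub (by omega : a₁ ≤ m), ← Nat.cast_sub (by omega : a₂ ≤ m),
      ← Nat.cast_sub hm, hFf, hFf, hFf, hFf, hf m hm]
    ring
  -- The convolution `g * D` solves the same inhomogeneous recurrence as `F`.
  have hPF : ∑ m ∈ Finset.range a₃, g ((n : ℤ) - m) * D m = F n := by
    refine eq_of_rec (P := fun q => ∑ m ∈ Finset.range a₃, g (q - m) * D m) (F := F) (D := D)
      ha₁ h2 h3 ?_ hF0 (k₁ := k₁) (k₂ := k₂) (k₃ := k₃) ?_ ?_ n
    · intro q hq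
      exact Finset.sum_eq_zero fun m _ => by rw [hg0 _ (by omega), zero_mul]
    · intro q hq
      lift q to ℕ using hq
      have hdelta : D q = ∑ m ∈ Finset.range a₃, (if (q : ℤ) - m = 0 then 1 else 0) * D m := by
        by_cases hqa : q < a₃
        · rw [Finset.sum_eq_single q]
          · simp
          · intro m _ hm
            rw [if_neg (by omega), zero_mul]
          · intro h
            exact absurd (Finset.mem_range.2 hqa) h
        · rw [hDbig q (by omega), Finset.sum_eq_zero]
          intro m hm
          rw [if_neg (by have := Finset.mem_range.1 hm; omega), zero_mul]
      rw [hdelta]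
      simp only [Finset.mul_sum, ← Finset.sum_add_distrib]
      refine Finset.sum_congr rfl fun m _ => ?_
      rw [hrec (q - m), sub_right_comm _ (m : ℤ), sub_right_comm _ (m : ℤ),
        sub_right_comm _ (m : ℤ)]
      ring
    · intro q
      simp only [hD]
      ring
  have hexp : ∑ m ∈ Finset.range a₃, g ((n : ℤ) - m) * D m
      = ∑ i ∈ Finset.range a₃, g ((n : ℤ) - i) * f i
        - k₁ * ∑ i ∈ Finset.range (a₃ - a₁), g ((n : ℤ) - i - a₁) * f i
        - k₂ * ∑ i ∈ Finset.range (a₃ - a₂), g ((n : ℤ) - i - a₂) * f i := by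
    have e1 := sum_shift g F hF0 n (h12.trans h23).le
    have e2 := sum_shift g F hF0 n h23.le
    simp only [hFf] at e1 e2
    rw [← e1, ← e2, Finset.mul_sum, Finset.mul_sum, ← Finset.sum_sub_distrib,
      ← Finset.sum_sub_distrib]
    refine Finset.sum_congr rfl fun m hm => ?_
    have hm3 : F ((m : ℤ) - a₃) = 0 := hF0 _ (by have := Finset.mem_range.1 hm; omega)
    simp only [hD, hm3, hFf]
    ring
  have hIcc1 : Finset.Icc (a₃ - a₂) (a₃ - a₁ - 1) = Finset.Ico (a₃ - a₂) (a₃ - a₁) := by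
    ext i; simp only [Finset.mem_Icc, Finset.mem_Ico]; omega
  have hIcc2 : Finset.Icc (a₃ - a₁) (a₃ - 1) = Finset.Ico (a₃ - a₁) a₃ := by
    ext i; simp only [Finset.mem_Icc, Finset.mem_Ico]; omega
  -- For `i < a₃ - a₁` the argument `n - i` is positive, so the recurrence of `g` is homogeneous.
  have hlow : ∑ i ∈ Finset.range (a₃ - a₁), g ((n : ℤ) - i) * f i
      = k₁ * ∑ i ∈ Finset.range (a₃ - a₁), g ((n : ℤ) - i - a₁) * f i
        + k₂ * ∑ i ∈ Finset.range (a₃ - a₁), g ((n : ℤ) - i - a₂) * f i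
        + k₃ * ∑ i ∈ Finset.range (a₃ - a₁), g ((n : ℤ) - i - a₃) * f i := by
    simp only [Finset.mul_sum, ← Finset.sum_add_distrib]
    refine Finset.sum_congr rfl fun i hi => ?_
    rw [hrec (n - i), if_neg (by have := Finset.mem_range.1 hi; omega)]
    ring
  have s1 := Finset.sum_range_add_sum_Ico (fun i : ℕ => g ((n : ℤ) - i) * f i)
    (Nat.sub_le a₃ a₁)
  have s2 := Finset.sum_range_add_sum_Ico (fun i : ℕ => g ((n : ℤ) - i - a₂) * f i)
    (by omega : a₃ - a₂ ≤ a₃ - a₁)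
  rw [hIcc1, hIcc2, ← hFf n, ← hPF, hexp, ← s1, hlow, ← s2]
  ring
end

section
/- Let m ≥ 2 and let R(n) denote the number of compositions of n in which no part equals m (i.e., all parts lie in the positive integers different from m). Then for every n ≥ m + 1, R(n) = 2 R(n−1) − R(n−m) + R(n−m−1) as integers. -/
/-!
Splitting off the first part of a composition of `n ≥ 1` gives `R(n) = ∑ R(i)` over the `i < n`
with `n - i` an allowed part (`compCount_eq_sum`). When only the part `m` is forbidden and `m ≤ n`,
exactly the term `i = n - m` is absent, so `R(n) + R(n - m) = ∑_{i < n} R(i)`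
(`compCount_add_compCount_sub`). Subtracting this identity at `n - 1` from the one at `n` gives
the recurrence.
-/

/-- The number of `S`-restricted compositions of `n`: ordered tuples (lists) of
elements of `S` summing to `n`. -/
noncomputable def compCount (S : Set ℕ) (n : ℕ) : ℕ :=
  Nat.card {l : List ℕ // (∀ x ∈ l, x ∈ S) ∧ l.sum = n}

/-- With positive parts only, restricted compositions embed in Mathlib's `Composition n`. -/
lemma finite_restricted {S : Set ℕ} (hS : 0 ∉ S) (n : ℕ) :
    Finite {l : List ℕ // (∀ x ∈ l, x ∈ S) ∧ l.sum = n} := by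
  refine Finite.of_injective (β := Composition n)
    (fun l => ⟨l.1, fun {i} hi => Nat.pos_of_ne_zero fun h => hS (h ▸ l.2.1 i hi), l.2.2⟩) ?_
  intro a b h
  exact Subtype.ext (congrArg Composition.blocks h)

/-- A nonempty restricted composition of `n` amounts to the sum `i < n` of its tail, the tail
itself, and the requirement that the first part `n - i` be allowed. -/
noncomputable def consEquiv {S : Set ℕ} (hS : 0 ∉ S) {n : ℕ} (hn : 0 < n) :
    (Σ i : Fin n, {l : List ℕ // n - (i : ℕ) ∈ S ∧ (∀ x ∈ l, x ∈ S) ∧ l.sum = i}) ≃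
      {l : List ℕ // (∀ x ∈ l, x ∈ S) ∧ l.sum = n} := by
  refine Equiv.ofBijective (fun p => ⟨(n - (p.1 : ℕ)) :: p.2.1, ?_, ?_⟩) ⟨?_, ?_⟩
  · intro x hx
    rcases List.mem_cons.1 hx with rfl | hx
    · exact p.2.2.1
    · exact p.2.2.2.1 x hx
  · have := p.2.2.2.2
    have := p.1.2
    simp only [List.sum_cons]
    omega
  · rintro ⟨i, l, h1, h2, h3⟩ ⟨j, k, h4, h5, h6⟩ h
    simp only [Subtype.mk.injEq, List.cons.injEq] at h
    obtain ⟨-, rfl⟩ := h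
    obtain rfl : i = j := Fin.ext (h3.symm.trans h6)
    rfl
  · rintro ⟨l, h1, h2⟩
    cases l with
    | nil => simp at h2; omega
    | cons a l =>
      have ha : a ∈ S := h1 a (by simp)
      have ha0 : a ≠ 0 := fun h => hS (h ▸ ha)
      simp only [List.sum_cons] at h2
      have hsub : n - l.sum = a := by omega
      refine ⟨⟨⟨l.sum, by omega⟩, l, by simpa [hsub] using ha,
        fun x hx => h1 x (by simp [hx]), rfl⟩, ?_⟩
      simp [hsub]

open Classical in
lemma compCount_eq_sum {S : Set ℕ} (hS : 0 ∉ S) {n : ℕ} (hn : 0 < n) :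
    compCount S n = ∑ i ∈ Finset.range n, if n - i ∈ S then compCount S i else 0 := by
  have hfin (i : ℕ) := finite_restricted hS i
  have hfin' (i : Fin n) :
      Finite {l : List ℕ // n - (i : ℕ) ∈ S ∧ (∀ x ∈ l, x ∈ S) ∧ l.sum = i} :=
    Finite.of_injective
      (β := {l : List ℕ // (∀ x ∈ l, x ∈ S) ∧ l.sum = i}) (fun l => ⟨l.1, l.2.2⟩)
      fun a b h => Subtype.ext (Subtype.mk.inj h)
  rw [compCount, ← Nat.card_congr (consEquiv hS hn), Nat.card_sigma,
    ← Fin.sum_univ_eq_sum_range (fun i => if n - i ∈ S then compCount S i else 0)]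
  refine Finset.sum_congr rfl fun i _ => ?_
  by_cases h : n - (i : ℕ) ∈ S <;> simp [h, compCount]

lemma compCount_add_compCount_sub {m n : ℕ} (hm : 0 < m) (hn : m ≤ n) :
    compCount {k : ℕ | 0 < k ∧ k ≠ m} n + compCount {k : ℕ | 0 < k ∧ k ≠ m} (n - m)
      = ∑ i ∈ Finset.range n, compCount {k : ℕ | 0 < k ∧ k ≠ m} i := by
  classical
  have hmem : n - m ∈ Finset.range n := Finset.mem_range.2 (by omega)
  rw [compCount_eq_sum (by simp) (by omega : 0 < n), ← Finset.add_sum_erase _ _ hmem,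
    ← Finset.add_sum_erase _ (fun i => compCount {k : ℕ | 0 < k ∧ k ≠ m} i) hmem,
    if_neg (by simp only [Set.mem_ofPred_eq]; omega), zero_add, add_comm]
  congr 1
  refine Finset.sum_congr rfl fun i hi => if_pos ?_
  simp only [Finset.mem_erase, Finset.mem_range] at hi
  simp only [Set.mem_ofPred_eq]
  omega

theorem stmt12 (m : ℕ) (hm : 2 ≤ m) (n : ℕ) (hn : m + 1 ≤ n) :
    (compCount {k : ℕ | 0 < k ∧ k ≠ m} n : ℤ)
      = 2 * compCount {k : ℕ | 0 < k ∧ k ≠ m} (n - 1)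
        - compCount {k : ℕ | 0 < k ∧ k ≠ m} (n - m)
        + compCount {k : ℕ | 0 < k ∧ k ≠ m} (n - m - 1) := by
  obtain ⟨k, rfl⟩ : ∃ k, n = k + 1 := ⟨n - 1, by omega⟩
  have h1 := compCount_add_compCount_sub (by omega : 0 < m) (by omega : m ≤ k + 1)
  have h2 := compCount_add_compCount_sub (by omega : 0 < m) (by omega : m ≤ k)
  rw [Finset.sum_range_succ, ← h2] at h1
  rw [Nat.add_sub_cancel, show k + 1 - m - 1 = k - m by omega]
  omega
end
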